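/- arXiv:1012.3271 — 6 statements merged into one kernel-verified Lean document; each statement's English description precedes it below -/
import Mathlib

section
/- Let f ∈ ℝ[x₁,…,xₙ] and let d be such that 2d ≥ deg f. Then there exists a nonnegative vector λ* = (λ*₀, λ*₁, …, λ*ₙ) ∈ ℝ₊^{n+1} such that the polynomial g(x) = f(x) + λ*₀ + Σ_{i=1}^n λ*ᵢ xᵢ^{2d} is a sum of squares of polynomials of degree at most d, and ‖f − g‖₁ = Σ_{i=0}^n λ*ᵢ = ρ_d(f); that is, g is a best ℓ₁-norm approximation of f by a sum of squares of degree at most 2d. -/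
open MvPolynomial Finset

/-- The ℓ₁-norm of the coefficient vector of a polynomial. -/
noncomputable def l1Norm {n : ℕ} (f : MvPolynomial (Fin n) ℝ) : ℝ :=
  ∑ α ∈ f.support, |f.coeff α|

/-- `IsSOS d g` : `g` is a sum of squares of polynomials of degree at most `d`
(i.e. `g ∈ Σ[x]_d`). -/
def IsSOS {n : ℕ} (d : ℕ) (g : MvPolynomial (Fin n) ℝ) : Prop :=
  ∃ (k : ℕ) (h : Fin k → MvPolynomial (Fin n) ℝ),
    (∀ i, (h i).totalDegree ≤ d) ∧ g = ∑ i, (h i) ^ 2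

/-- `rho d f = inf {‖f - g‖₁ : g ∈ Σ[x]_d}`. -/
noncomputable def rho {n : ℕ} (d : ℕ) (f : MvPolynomial (Fin n) ℝ) : ℝ :=
  sInf {r : ℝ | ∃ g, IsSOS d g ∧ r = l1Norm (f - g)}

theorem IsSOS.zero {n d : ℕ} : IsSOS d (0 : MvPolynomial (Fin n) ℝ) :=
  ⟨0, fun _ => 0, fun i => i.elim0, by simp⟩

theorem IsSOS.sq {n d : ℕ} {h : MvPolynomial (Fin n) ℝ} (hh : h.totalDegree ≤ d) :
    IsSOS d (h ^ 2) :=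
  ⟨1, fun _ => h, fun _ => hh, by simp⟩

theorem IsSOS.add {n d : ℕ} {a b : MvPolynomial (Fin n) ℝ} (ha : IsSOS d a) (hb : IsSOS d b) :
    IsSOS d (a + b) := by
  obtain ⟨k, h, hh, rfl⟩ := ha
  obtain ⟨k', h', hh', rfl⟩ := hb
  refine ⟨k + k', Fin.append h h', ?_, ?_⟩
  · intro i
    refine Fin.addCases (fun i => ?_) (fun i => ?_) i
    · simpa using hh i
    · simpa using hh' i
  · simp [Fin.sum_univ_add]

theorem IsSOS.smul {n d : ℕ} {a : MvPolynomial (Fin n) ℝ} (ha : IsSOS d a) {c : ℝ} (hc : 0 ≤ c) :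
    IsSOS d (C c * a) := by
  obtain ⟨k, h, hh, rfl⟩ := ha
  refine ⟨k, fun i => C (Real.sqrt c) * h i, fun i => ?_, ?_⟩
  · refine (totalDegree_mul _ _).trans ?_
    simpa using hh i
  · simp only [mul_pow, ← Finset.mul_sum, ← C_pow, Real.sq_sqrt hc]

theorem IsSOS.sum {n d : ℕ} {ι : Type*} (s : Finset ι) (a : ι → MvPolynomial (Fin n) ℝ)
    (ha : ∀ i ∈ s, IsSOS d (a i)) : IsSOS d (∑ i ∈ s, a i) := by
  classical
  induction s using Finset.induction_on with
  | empty => simpa using IsSOS.zero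
  | insert i s hi ih =>
    rw [Finset.sum_insert hi]
    exact (ha i (by simp)).add (ih fun j hj => ha j (by simp [hj]))

theorem IsSOS.convex_seq {n d : ℕ} (y : ℕ → MvPolynomial (Fin n) ℝ) (m : ℕ)
    (hy : ∀ k, k + 2 ≤ m → IsSOS d (y k + y (k + 2) - 2 * y (k + 1))) :
    ∀ a b : ℕ, a + b = m →
      IsSOS d (C (b : ℝ) * y 0 + C (a : ℝ) * y m - C (m : ℝ) * y a) := by
  induction m with
  | zero =>
    intro a b hab
    obtain ⟨rfl, rfl⟩ : a = 0 ∧ b = 0 := by omega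
    simpa using IsSOS.zero
  | succ m ih =>
    have ih' := ih (fun k hk => hy k (by omega))
    have key : IsSOS d (y 0 + C (m : ℝ) * y (m + 1) - C ((m + 1 : ℕ) : ℝ) * y m) := by
      rcases m with _ | m
      · simpa using IsSOS.zero
      · have h1 := ih' m 1 rfl
        have h2 := (hy m (by omega)).smul (c := ((m + 1 : ℕ) : ℝ)) (by positivity)
        convert h1.add h2 using 1
        simp only [Nat.cast_add, Nat.cast_one, map_add, map_one, map_natCast]
        ring
    intro a b hab
    rcases b with _ | b
    · obtain rfl : a = m + 1 := by omega
      simpa using IsSOS.zero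
    · have h1 := (ih' a b (by omega)).smul (c := ((m + 1 : ℕ) : ℝ)) (by positivity)
      have h2 := key.smul (c := (a : ℝ)) (by positivity)
      rcases Nat.eq_zero_or_pos m with rfl | hm
      · obtain ⟨rfl, rfl⟩ : a = 0 ∧ b = 0 := by omega
        simpa using IsSOS.zero
      have h3 := (h1.add h2).smul (c := (m : ℝ)⁻¹) (by positivity)
      convert h3 using 1
      have hb : (m : MvPolynomial (Fin n) ℝ) = a + b := by
        have : m = a + b := by omega
        exact_mod_cast this
      have hinv : C ((m : ℝ)⁻¹) * (m : MvPolynomial (Fin n) ℝ) = 1 := by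
        rw [← map_natCast (C : ℝ →+* MvPolynomial (Fin n) ℝ), ← C_mul,
          inv_mul_cancel₀ (by positivity), C_1]
      simp only [Nat.cast_add, Nat.cast_one, map_add, map_one, map_natCast]
      have : ((b:MvPolynomial (Fin n) ℝ) + 1) * y 0 + (a:MvPolynomial (Fin n) ℝ) * y (m+1) - ((m:MvPolynomial (Fin n) ℝ)+1) * y a = 
        (C ((m : ℝ)⁻¹) * (m : MvPolynomial (Fin n) ℝ)) *
         (((b:MvPolynomial (Fin n) ℝ) + 1) * y 0 + (a:MvPolynomial (Fin n) ℝ) * y (m+1) - ((m:MvPolynomial (Fin n) ℝ)+1) * y a) := by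
        rw [hinv, one_mul]
      rw [this, mul_assoc]
      congr 1
      rw [hb]
      ring

/-- homogenized variables -/
noncomputable def zv {n : ℕ} : Fin (n + 1) → MvPolynomial (Fin n) ℝ :=
  Fin.cons 1 X

noncomputable def mono {n : ℕ} (β : Fin (n + 1) → ℕ) : MvPolynomial (Fin n) ℝ :=
  ∏ i, zv i ^ β i

theorem mono_degree {n : ℕ} (β : Fin (n + 1) → ℕ) : (mono β).totalDegree ≤ ∑ i, β i := by
  refine (totalDegree_finsetProd _ _).trans (Finset.sum_le_sum fun i _ => ?_)
  refine (totalDegree_pow _ _).trans ?_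
  refine Fin.cases ?_ (fun i => ?_) i <;> simp [zv]

theorem mono_mul {n : ℕ} (β γ : Fin (n + 1) → ℕ) : mono (β + γ) = mono β * mono γ := by
  simp [mono, pow_add, Finset.prod_mul_distrib]

noncomputable def pen {n : ℕ} (d : ℕ) (l : Fin (n + 1) → ℝ) : MvPolynomial (Fin n) ℝ :=
  ∑ i, C (l i) * zv i ^ (2 * d)

theorem hurwitz {n d : ℕ} (N : ℕ) : ∀ β : Fin (n + 1) → ℕ, ∑ i, β i = d →
    (Finset.univ.filter fun i => β i ≠ 0).card = N →
    ∃ l : Fin (n + 1) → ℝ, (∀ i, 0 ≤ l i) ∧ ∑ i, l i = 1 ∧ IsSOS d (pen d l - mono β ^ 2) := by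
  induction N using Nat.strong_induction_on with
  | _ N ih =>
  intro β hβ hN
  by_cases hc : ∃ i j, i ≠ j ∧ β i ≠ 0 ∧ β j ≠ 0
  · obtain ⟨i, j, hij, hi, hj⟩ := hc
    set m := β i + β j with hm
    let B : ℕ → ℕ → Fin (n + 1) → ℕ := fun a b => Function.update (Function.update β i a) j b
    have hsum : ∀ a b, a + b = m → ∑ t, B a b t = d := by
      intro a b hab
      rw [← hβ]
      have e : ∀ g : Fin (n + 1) → ℕ, ∑ t, g t = g i + g j + ∑ t ∈ (univ.erase i).erase j, g t := by
        intro g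
        rw [← Finset.add_sum_erase univ g (mem_univ i),
          ← Finset.add_sum_erase (univ.erase i) g (a := j) (by simp [hij.symm]), add_assoc]
      rw [e, e β]
      congr 1
      · simp [B, hij, hab, hm]
      · refine Finset.sum_congr rfl fun t ht => ?_
        simp only [Finset.mem_erase] at ht
        simp [B, ht.1, ht.2.1]
    have hBB : B (β i) (β j) = β := by simp [B]
    have hcard : ∀ a b, (a = 0 ∨ b = 0) → (Finset.univ.filter fun t => B a b t ≠ 0).card < N := by
      intro a b hab
      rw [← hN]
      apply Finset.card_lt_card
      rw [Finset.ssubset_iff_of_subset]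
      · rcases hab with h | h
        · exact ⟨i, by simp [hi], by simp [B, hij, h]⟩
        · exact ⟨j, by simp [hj], by simp [B, h]⟩
      · intro t ht
        simp only [Finset.mem_filter, Finset.mem_univ, true_and] at ht ⊢
        by_cases h1 : t = j
        · rw [h1]; exact hj
        by_cases h2 : t = i
        · rw [h2]; exact hi
        simpa [B, h1, h2] using ht
    have hmid : ∀ k, k + 2 ≤ m →
        IsSOS d (mono (B k (m - k)) ^ 2 + mono (B (k + 2) (m - (k + 2))) ^ 2
          - 2 * mono (B (k + 1) (m - (k + 1))) ^ 2) := by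
      intro k hk
      have h1 : mono (B k (m - k)) * mono (B (k + 2) (m - (k + 2)))
          = mono (B (k + 1) (m - (k + 1))) ^ 2 := by
        rw [pow_two, ← mono_mul, ← mono_mul]
        congr 1
        ext t
        by_cases h1 : t = j
        · subst h1; simp [B]; omega
        by_cases h2 : t = i
        · subst h2; simp [B, h1]; omega
        simp [B, h1, h2]
      have h2 : IsSOS d ((mono (B k (m - k)) - mono (B (k + 2) (m - (k + 2)))) ^ 2) := by
        apply IsSOS.sq
        refine (totalDegree_sub _ _).trans (max_le ?_ ?_)
        · exact (mono_degree _).trans (hsum _ _ (by omega)).le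
        · exact (mono_degree _).trans (hsum _ _ (by omega)).le
      convert h2 using 1
      rw [← h1]; ring
    have hconv := IsSOS.convex_seq (fun k => mono (B k (m - k)) ^ 2) m hmid (β i) (β j) hm.symm
    obtain ⟨l0, l0n, l0s, l0S⟩ := ih _ (hcard 0 (m - 0) (Or.inl rfl)) _ (hsum _ _ (by omega)) rfl
    obtain ⟨l1, l1n, l1s, l1S⟩ := ih _ (hcard m (m - m) (Or.inr (by omega))) _
      (hsum _ _ (by omega)) rfl
    have hmpos : (0 : ℝ) < m := by
      have : 0 < m := by omega
      exact_mod_cast this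
    refine ⟨fun t => (m : ℝ)⁻¹ * (β j * l0 t + β i * l1 t), fun t => ?_, ?_, ?_⟩
    · have := l0n t
      have := l1n t
      positivity
    · rw [← Finset.mul_sum, Finset.sum_add_distrib, ← Finset.mul_sum, ← Finset.mul_sum, l0s, l1s,
        inv_mul_eq_one₀ hmpos.ne', hm]
      push_cast
      ring
    · have h3 := ((hconv.add (l0S.smul (c := (β j : ℝ)) (by positivity))).add
        (l1S.smul (c := (β i : ℝ)) (by positivity))).smul (c := (m : ℝ)⁻¹) (by positivity)
      convert h3 using 1
      have hmj : m - β i = β j := by omega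
      simp only [hmj, hBB]
      have hpen : pen d (fun t => (m : ℝ)⁻¹ * (β j * l0 t + β i * l1 t))
          = C ((m : ℝ)⁻¹) * (C (β j : ℝ) * pen d l0 + C (β i : ℝ) * pen d l1) := by
        simp only [pen, Finset.mul_sum, ← Finset.sum_add_distrib]
        refine Finset.sum_congr rfl fun t _ => ?_
        simp only [C_mul, C_add]
        ring
      have hinv : C ((m : ℝ)⁻¹) * C (m : ℝ) = (1 : MvPolynomial (Fin n) ℝ) := by
        rw [← C_mul, inv_mul_cancel₀ hmpos.ne', C_1]
      rw [hpen]
      linear_combination (mono β ^ 2) * hinv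
  · push Not at hc
    obtain ⟨i, hi⟩ : ∃ i, ∀ j, i ≠ j → β j = 0 := by
      by_cases h : ∃ i, β i ≠ 0
      · obtain ⟨i, hi⟩ := h
        exact ⟨i, fun j hij => hc i j hij hi⟩
      · push Not at h
        exact ⟨0, fun j _ => h j⟩
    have hβi : β i = d := by
      rw [← hβ]
      exact (Finset.sum_eq_single i (fun j _ hj => hi j hj.symm) (by simp)).symm
    refine ⟨Pi.single i 1, fun j => ?_, by simp, ?_⟩
    · by_cases h : j = i
      · subst h; simp
      · simp [h]
    · have h1 : pen d (Pi.single i 1) = (zv i : MvPolynomial (Fin n) ℝ) ^ (2 * d) := by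
        rw [pen, Finset.sum_eq_single i (fun j _ hj => by simp [hj]) (by simp)]
        simp
      have h2 : mono β = (zv i : MvPolynomial (Fin n) ℝ) ^ d := by
        rw [mono, Finset.prod_eq_single i (fun j _ hj => by simp [hi j hj.symm]) (by simp), hβi]
      rw [h1, h2, ← pow_mul, mul_comm 2 d, sub_self]
      exact IsSOS.zero

theorem exists_split {ι : Type*} (s : Finset ι) (a : ι → ℕ) (d : ℕ) (h : d ≤ ∑ i ∈ s, a i) :
    ∃ b : ι → ℕ, (∀ i, b i ≤ a i) ∧ ∑ i ∈ s, b i = d := by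
  classical
  induction s using Finset.induction_on generalizing d with
  | empty => exact ⟨0, by simp, by simp at h; simp [h]⟩
  | insert i s hi ih =>
    rw [Finset.sum_insert hi] at h
    obtain ⟨b, hb, hs⟩ := ih (d - a i) (by omega)
    refine ⟨Function.update b i (min d (a i)), fun j => ?_, ?_⟩
    · by_cases hj : j = i
      · subst hj; simp
      · simpa [hj] using hb j
    · rw [Finset.sum_insert hi, Finset.sum_update_of_notMem hi, hs]
      simp; omega

theorem pen_add {n : ℕ} (d : ℕ) (l l' : Fin (n + 1) → ℝ) : pen d (l + l') = pen d l + pen d l' := by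
  simp [pen, add_mul, Finset.sum_add_distrib]

theorem pen_smul {n : ℕ} (d : ℕ) (c : ℝ) (l : Fin (n + 1) → ℝ) :
    pen d (c • l) = C c * pen d l := by
  simp [pen, Finset.mul_sum, mul_assoc]

theorem pen_sum {n : ℕ} {ι : Type*} (s : Finset ι) (d : ℕ) (l : ι → Fin (n + 1) → ℝ) :
    pen d (∑ a ∈ s, l a) = ∑ a ∈ s, pen d (l a) := by
  simp only [pen, Finset.sum_apply, map_sum, Finset.sum_mul]
  exact Finset.sum_comm

theorem mono_bound {n d : ℕ} (α : Fin (n + 1) → ℕ) (hα : ∑ i, α i = 2 * d) (c : ℝ) :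
    ∃ l : Fin (n + 1) → ℝ, (∀ i, 0 ≤ l i) ∧ ∑ i, l i = |c| ∧
      IsSOS d (C c * mono α + pen d l) := by
  obtain ⟨β, hβ, hβs⟩ := exists_split univ α d (by omega)
  obtain ⟨γ, rfl⟩ : ∃ γ, α = β + γ := ⟨fun i => α i - β i, by ext i; simp [hβ i]⟩
  have hγs : ∑ i, γ i = d := by
    simp only [Pi.add_apply, Finset.sum_add_distrib] at hα; omega
  obtain ⟨l, hl, hls, hS⟩ := hurwitz _ β hβs rfl
  obtain ⟨k, hk, hks, hT⟩ := hurwitz _ γ hγs rfl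
  obtain ⟨s, hs, hcs⟩ : ∃ s : ℝ, s ^ 2 = 1 ∧ c = |c| * s := by
    rcases le_total 0 c with h | h
    · exact ⟨1, by simp, by simp [abs_of_nonneg h]⟩
    · exact ⟨-1, by simp, by simp [abs_of_nonpos h]⟩
  refine ⟨(|c| / 2) • (l + k), fun i => ?_, ?_, ?_⟩
  · have := hl i
    have := hk i
    simp only [Pi.smul_apply, Pi.add_apply, smul_eq_mul]; positivity
  · simp only [Pi.smul_apply, Pi.add_apply, smul_eq_mul, ← Finset.mul_sum,
      Finset.sum_add_distrib, hls, hks]; ring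
  · have hq : IsSOS d ((mono β + C s * mono γ) ^ 2) := by
      apply IsSOS.sq
      refine (totalDegree_add _ _).trans (max_le ?_ ?_)
      · exact (mono_degree _).trans hβs.le
      · refine (totalDegree_mul _ _).trans ?_
        simpa using (mono_degree _).trans hγs.le
    convert ((hS.add hT).add hq).smul (c := |c| / 2) (by positivity) using 1
    rw [pen_smul, pen_add, mono_mul]
    have e1 : (C s : MvPolynomial (Fin n) ℝ) ^ 2 = 1 := by rw [← C_pow, hs, C_1]
    have e2 : (C c : MvPolynomial (Fin n) ℝ) = 2 * C (|c| / 2) * C s := by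
      conv_lhs => rw [hcs]
      rw [show (2 : MvPolynomial (Fin n) ℝ) = C 2 from rfl, ← C_mul, ← C_mul]
      congr 1; ring
    rw [e2]
    linear_combination (- C (|c| / 2) * mono γ ^ 2) * e1

theorem poly_bound {n d : ℕ} (h : MvPolynomial (Fin n) ℝ) (hd : h.totalDegree ≤ 2 * d) :
    ∃ l : Fin (n + 1) → ℝ, (∀ i, 0 ≤ l i) ∧ ∑ i, l i = l1Norm h ∧ IsSOS d (h + pen d l) := by
  have key : ∀ α : Fin n →₀ ℕ, ∃ l : Fin (n + 1) → ℝ, α ∈ h.support → (∀ i, 0 ≤ l i) ∧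
      ∑ i, l i = |h.coeff α| ∧ IsSOS d (monomial α (h.coeff α) + pen d l) := by
    intro α
    by_cases hα : α ∈ h.support
    · have h1 : ∑ i, α i ≤ 2 * d := by
        refine le_trans ?_ hd
        have := le_totalDegree hα
        rwa [Finsupp.sum_fintype _ _ (by simp)] at this
      obtain ⟨l, h1, h2, h3⟩ := mono_bound (d := d) (Fin.cons (2 * d - ∑ i, α i) α)
        (by rw [Fin.sum_univ_succ]; simp; omega) (h.coeff α)
      refine ⟨l, fun _ => ⟨h1, h2, ?_⟩⟩
      convert h3 using 2
      rw [monomial_eq, mono, Fin.prod_univ_succ, Finsupp.prod_fintype _ _ (by simp)]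
      simp [zv]
    · exact ⟨0, fun h => absurd h hα⟩
  choose l hl using key
  refine ⟨∑ α ∈ h.support, l α, fun i => ?_, ?_, ?_⟩
  · rw [Finset.sum_apply]
    exact Finset.sum_nonneg fun α hα => (hl α hα).1 i
  · simp only [Finset.sum_apply]
    rw [Finset.sum_comm, l1Norm]
    exact Finset.sum_congr rfl fun α hα => (hl α hα).2.1
  · rw [pen_sum]
    conv => arg 2; lhs; rw [h.as_sum]
    rw [← Finset.sum_add_distrib]
    exact IsSOS.sum _ _ fun α hα => (hl α hα).2.2

theorem gram_reduce {k N : ℕ} (A : Matrix (Fin k) (Fin N) ℝ) :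
    ∃ H : Matrix (Fin N) (Fin N) ℝ, H.transpose * H = A.transpose * A := by
  open scoped MatrixOrder in
  have hA : (A.conjTranspose * A).PosSemidef := Matrix.posSemidef_conjTranspose_mul_self A
  obtain ⟨X, hX, -, h⟩ := CFC.exists_sqrt_of_isSelfAdjoint_of_quasispectrumRestricts
    hA.isHermitian (QuasispectrumRestricts.nnreal_of_nonneg hA.nonneg)
  refine ⟨X, ?_⟩
  have h1 : X.transpose = X := by
    have := hX.star_eq
    rwa [Matrix.star_eq_conjTranspose, Matrix.conjTranspose_eq_transpose_of_trivial] at this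
  rw [h1]
  rw [Matrix.conjTranspose_eq_transpose_of_trivial] at h
  exact h

theorem sum_sq_gram {n k N : ℕ} (b : Fin N → MvPolynomial (Fin n) ℝ)
    (A : Matrix (Fin k) (Fin N) ℝ) :
    ∑ t, (∑ j, C (A t j) * b j) ^ 2
      = ∑ i, ∑ j, C ((A.transpose * A) i j) * (b i * b j) := by
  simp only [Matrix.mul_apply, Matrix.transpose_apply, map_sum, pow_two, 
    Finset.sum_mul, C_mul]
  rw [Finset.sum_comm]
  refine Finset.sum_congr rfl fun i _ => ?_
  rw [Finset.sum_comm]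
  refine Finset.sum_congr rfl fun j _ => ?_
  rw [Finset.mul_sum]
  refine Finset.sum_congr rfl fun t _ => ?_
  ring

theorem exists_basis (n d : ℕ) : ∃ (N : ℕ) (b : Fin N → MvPolynomial (Fin n) ℝ),
    (∀ v : Fin N → ℝ, (∑ j, C (v j) * b j).totalDegree ≤ d) ∧
    (∀ h : MvPolynomial (Fin n) ℝ, h.totalDegree ≤ d → ∃ v : Fin N → ℝ, h = ∑ j, C (v j) * b j) ∧
    (∀ v : Fin N → ℝ, ∑ j, C (v j) * b j = 0 → v = 0) := by
  let V := restrictTotalDegree (Fin n) ℝ d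
  let B := Module.finBasis ℝ V
  have key : ∀ v : Fin (Module.finrank ℝ V) → ℝ, ((∑ j, v j • B j : V) : MvPolynomial (Fin n) ℝ)
      = ∑ j, C (v j) * (B j : MvPolynomial (Fin n) ℝ) := by
    intro v
    simp [MvPolynomial.smul_eq_C_mul]
  refine ⟨_, fun j => (B j : MvPolynomial (Fin n) ℝ), fun v => ?_, fun h hh => ?_, fun v hv => ?_⟩
  · rw [← key, ← mem_restrictTotalDegree]
    exact Subtype.property _
  · refine ⟨B.repr ⟨h, (mem_restrictTotalDegree _ _ _).2 hh⟩, ?_⟩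
    rw [← key, B.sum_repr]
  · rw [← key] at hv
    have hv' := Subtype.ext (a2 := (0 : V)) hv
    exact funext (Fintype.linearIndependent_iff.1 B.linearIndependent v hv')

theorem exists_min {n d : ℕ} (f : MvPolynomial (Fin n) ℝ) (l₀ : Fin (n + 1) → ℝ)
    (hl₀ : ∀ i, 0 ≤ l₀ i) (hS : IsSOS d (f + pen d l₀)) :
    ∃ l : Fin (n + 1) → ℝ, (∀ i, 0 ≤ l i) ∧ IsSOS d (f + pen d l) ∧
      ∀ l' : Fin (n + 1) → ℝ, (∀ i, 0 ≤ l' i) → IsSOS d (f + pen d l') → ∑ i, l i ≤ ∑ i, l' i := by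
  obtain ⟨N, b, hb1, hb2, hb3⟩ := exists_basis n d
  have sos_iff : ∀ g : MvPolynomial (Fin n) ℝ, IsSOS d g ↔
      ∃ H : Fin N → Fin N → ℝ, g = ∑ t, (∑ j, C (H t j) * b j) ^ 2 := by
    intro g
    constructor
    · rintro ⟨k, h, hh, rfl⟩
      choose A hA using fun t => hb2 (h t) (hh t)
      obtain ⟨H, hH⟩ := gram_reduce (Matrix.of A)
      refine ⟨H, ?_⟩
      rw [sum_sq_gram b H, hH, ← sum_sq_gram]
      exact Finset.sum_congr rfl fun t _ => by rw [hA t]; rfl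
    · rintro ⟨H, rfl⟩
      exact ⟨N, _, fun t => hb1 (H t), rfl⟩
  let R := ∑ i, l₀ i
  let T : (Fin N → ℝ) →ₗ[ℝ] ((Fin n → ℝ) → ℝ) :=
    { toFun := fun v x => ∑ j, v j * eval x (b j)
      map_add' := fun v w => by ext x; simp [add_mul, Finset.sum_add_distrib]
      map_smul' := fun c v => by ext x; simp [Finset.mul_sum, mul_assoc] }
  have hTe : ∀ v x, T v x = eval x (∑ j, C (v j) * b j) := by
    intro v x; simp [T]
  have hTinj : LinearMap.ker T = ⊥ := by
    rw [LinearMap.ker_eq_bot']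
    intro v hv
    apply hb3
    apply MvPolynomial.funext
    intro x
    rw [← hTe, hv]; simp
  have hTc := LinearMap.isClosedEmbedding_of_injective hTinj
  let P : (Fin (n + 1) → ℝ) → (Fin n → ℝ) → ℝ := fun l x => ∑ i, l i * eval x (zv i) ^ (2 * d)
  have hP : ∀ l x, P l x = eval x (pen d l) := by intro l x; simp [P, pen]
  let c : (Fin n → ℝ) → ℝ := fun x => eval x f + P (fun _ => R) x + 1
  let K : Set ((Fin (n + 1) → ℝ) × (Fin N → Fin N → ℝ)) :=
    (Set.univ.pi fun _ => Set.Icc 0 R) ×ˢ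
      (Set.univ.pi fun _ => T ⁻¹' (Set.univ.pi fun x => Set.Icc (-c x) (c x)))
  have hK : IsCompact K := by
    refine IsCompact.prod (isCompact_univ_pi fun _ => isCompact_Icc) (isCompact_univ_pi fun _ => ?_)
    exact hTc.isCompact_preimage (isCompact_univ_pi fun _ => isCompact_Icc)
  let F : Set ((Fin (n + 1) → ℝ) × (Fin N → Fin N → ℝ)) :=
    {p | ∀ x, eval x f + P p.1 x = ∑ t, (T (p.2 t) x) ^ 2}
  have hTcont : Continuous T := hTc.continuous
  have hF : IsClosed F := by
    have : F = ⋂ x, {p : (Fin (n + 1) → ℝ) × (Fin N → Fin N → ℝ) |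
        eval x f + P p.1 x = ∑ t, (T (p.2 t) x) ^ 2} := by ext; simp [F]
    rw [this]
    refine isClosed_iInter fun x => isClosed_eq ?_ ?_
    · dsimp only [P]; fun_prop
    · dsimp only [T, LinearMap.coe_mk, AddHom.coe_mk]; fun_prop
  have hFiff : ∀ l H, (l, H) ∈ F ↔ f + pen d l = ∑ t, (∑ j, C (H t j) * b j) ^ 2 := by
    intro l H
    rw [MvPolynomial.funext_iff]
    simp only [F, Set.mem_ofPred_eq, hP, hTe, map_add, map_sum, map_pow]
  have hFK : ∀ l H, (∀ i, 0 ≤ l i) → ∑ i, l i ≤ R → (l, H) ∈ F → (l, H) ∈ K := by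
    intro l H hl hlR hm
    have hli : ∀ i, l i ≤ R := fun i =>
      (Finset.single_le_sum (fun j _ => hl j) (mem_univ i)).trans hlR
    refine ⟨fun i _ => ⟨hl i, hli i⟩, fun t _ x _ => ?_⟩
    have h1 : (T (H t) x) ^ 2 ≤ eval x f + P l x := by
      rw [hm x]
      exact Finset.single_le_sum (f := fun t => (T (H t) x) ^ 2) (fun j _ => sq_nonneg _)
        (mem_univ t)
    have h2 : P l x ≤ P (fun _ => R) x := by
      refine Finset.sum_le_sum fun i _ => mul_le_mul_of_nonneg_right (hli i) ?_
      rw [pow_mul]; positivity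
    have h3 : c x = eval x f + P (fun _ => R) x + 1 := rfl
    constructor <;> nlinarith [sq_nonneg (T (H t) x - 1), sq_nonneg (T (H t) x + 1)]
  obtain ⟨H₀, hH₀⟩ := (sos_iff _).1 hS
  have hcomp : IsCompact (K ∩ F) := hK.inter_right hF
  have hne : (K ∩ F).Nonempty := by
    have := (hFiff l₀ H₀).2 hH₀
    exact ⟨(l₀, H₀), hFK _ _ hl₀ le_rfl this, this⟩
  obtain ⟨⟨l, H⟩, ⟨hlK, hlF⟩, hmin⟩ := hcomp.exists_isMinOn hne
    (f := fun p => ∑ i, p.1 i) (by fun_prop)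
  refine ⟨l, fun i => (hlK.1 i trivial).1, (sos_iff _).2 ⟨H, (hFiff _ _).1 hlF⟩, ?_⟩
  have hmin' : ∀ l' : Fin (n + 1) → ℝ, (∀ i, 0 ≤ l' i) → IsSOS d (f + pen d l') →
      ∑ i, l' i ≤ R → ∑ i, l i ≤ ∑ i, l' i := by
    intro l' hl' hS' hR
    obtain ⟨H', hH'⟩ := (sos_iff _).1 hS'
    have := (hFiff l' H').2 hH'
    exact hmin ⟨hFK _ _ hl' hR this, this⟩
  intro l' hl' hS'
  rcases le_total (∑ i, l' i) R with h | h
  · exact hmin' l' hl' hS' h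
  · exact (hmin' l₀ hl₀ hS le_rfl).trans h

theorem l1Norm_eq_of_subset {n : ℕ} (f : MvPolynomial (Fin n) ℝ) (s : Finset (Fin n →₀ ℕ))
    (h : f.support ⊆ s) : l1Norm f = ∑ α ∈ s, |f.coeff α| := by
  refine Finset.sum_subset h fun α _ hα => ?_
  simp [notMem_support_iff.1 hα]

theorem l1Norm_add_le {n : ℕ} (f g : MvPolynomial (Fin n) ℝ) :
    l1Norm (f + g) ≤ l1Norm f + l1Norm g := by
  classical
  rw [l1Norm_eq_of_subset (f + g) (f.support ∪ g.support) support_add,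
    l1Norm_eq_of_subset f (f.support ∪ g.support) Finset.subset_union_left,
    l1Norm_eq_of_subset g (f.support ∪ g.support) Finset.subset_union_right,
    ← Finset.sum_add_distrib]
  exact Finset.sum_le_sum fun α _ => by rw [coeff_add]; exact abs_add_le _ _

theorem l1Norm_sum_le {n : ℕ} {ι : Type*} (s : Finset ι) (f : ι → MvPolynomial (Fin n) ℝ) :
    l1Norm (∑ i ∈ s, f i) ≤ ∑ i ∈ s, l1Norm (f i) := by
  classical
  induction s using Finset.induction_on with
  | empty => simp [l1Norm]
  | insert i s hi ih =>
    rw [Finset.sum_insert hi, Finset.sum_insert hi]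
    exact (l1Norm_add_le _ _).trans (by linarith)

theorem l1Norm_monomial_le {n : ℕ} (α : Fin n →₀ ℕ) (c : ℝ) : l1Norm (monomial α c) ≤ |c| := by
  rw [l1Norm_eq_of_subset (monomial α c) {α} support_monomial_subset]
  simp

theorem l1Norm_pen_le {n d : ℕ} (l : Fin (n + 1) → ℝ) (hl : ∀ i, 0 ≤ l i) :
    l1Norm (-pen d l) ≤ ∑ i, l i := by
  rw [pen, ← Finset.sum_neg_distrib]
  refine (l1Norm_sum_le _ _).trans (Finset.sum_le_sum fun i _ => ?_)
  obtain ⟨α, hα⟩ : ∃ α, -(C (l i) * zv i ^ (2 * d)) = monomial α (-l i) := by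
    refine Fin.cases ⟨0, ?_⟩ (fun i => ⟨Finsupp.single i (2 * d), ?_⟩) i
    · simp [zv]
    · simp [zv, C_mul_X_pow_eq_monomial]
  rw [hα]
  exact (l1Norm_monomial_le _ _).trans (by rw [abs_neg, abs_of_nonneg (hl i)])

theorem IsSOS.degree {n d : ℕ} {g : MvPolynomial (Fin n) ℝ} (hg : IsSOS d g) :
    g.totalDegree ≤ 2 * d := by
  obtain ⟨k, h, hh, rfl⟩ := hg
  refine totalDegree_finsetSum_le fun i _ => (totalDegree_pow _ _).trans ?_
  exact Nat.mul_le_mul_left 2 (hh i)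

/-- Best ℓ₁-approximation of `f` by a sum of squares of degree at most `2d`:
there is a nonnegative vector `l ∈ ℝ₊^{n+1}` such that
`g = f + l₀ + ∑ᵢ lᵢ xᵢ^{2d}` is a sum of squares of polynomials of degree at most `d`,
`‖f - g‖₁ = ∑ᵢ lᵢ`, and this value equals `ρ_d(f)`. -/
theorem best_l1_approx_by_sos {n d : ℕ} (f : MvPolynomial (Fin n) ℝ)
    (hf : f.totalDegree ≤ 2 * d) :
    ∃ l : Fin (n + 1) → ℝ, (∀ i, 0 ≤ l i) ∧
      IsSOS d (f + C (l 0) + ∑ i : Fin n, C (l i.succ) * X i ^ (2 * d)) ∧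
      l1Norm (f - (f + C (l 0) + ∑ i : Fin n, C (l i.succ) * X i ^ (2 * d))) = ∑ i, l i ∧
      ∑ i, l i = rho d f := by
  have hpen : ∀ l : Fin (n + 1) → ℝ,
      f + C (l 0) + ∑ i : Fin n, C (l i.succ) * X i ^ (2 * d) = f + pen d l := by
    intro l
    rw [pen, Fin.sum_univ_succ, add_assoc]
    simp [zv]
  simp only [hpen]
  have key : ∀ g, IsSOS d g → ∃ l : Fin (n + 1) → ℝ, (∀ i, 0 ≤ l i) ∧
      ∑ i, l i = l1Norm (f - g) ∧ IsSOS d (f + pen d l) := by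
    intro g hg
    obtain ⟨l, h1, h2, h3⟩ := poly_bound (f - g)
      ((totalDegree_sub _ _).trans (max_le hf hg.degree))
    refine ⟨l, h1, h2, ?_⟩
    convert hg.add h3 using 1
    ring
  obtain ⟨l₀, h1, -, h3⟩ := key 0 IsSOS.zero
  obtain ⟨l, hl, hS, hmin⟩ := exists_min f l₀ h1 h3
  have hle : l1Norm (f - (f + pen d l)) ≤ ∑ i, l i := by
    rw [show f - (f + pen d l) = -pen d l by ring]
    exact l1Norm_pen_le l hl
  have hlow : ∀ g, IsSOS d g → ∑ i, l i ≤ l1Norm (f - g) := by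
    intro g hg
    obtain ⟨l', h1, h2, h3⟩ := key g hg
    rw [← h2]
    exact hmin l' h1 h3
  have heq := le_antisymm hle (hlow _ hS)
  refine ⟨l, hl, hS, heq, ?_⟩
  have hleast : IsLeast {r : ℝ | ∃ g, IsSOS d g ∧ r = l1Norm (f - g)} (∑ i, l i) := by
    refine ⟨⟨_, hS, heq.symm⟩, ?_⟩
    rintro r ⟨g, hg, rfl⟩
    exact hlow g hg
  exact hleast.csInf_eq.symm
end

section
/- Let L be a linear functional on the space of real polynomials in n variables of degree at most 2d such that L(g²) ≥ 0 for every polynomial g of degree at most d. Then for every multi-index α ∈ ℕⁿ with |α| ≤ 2d, |L(x^α)| ≤ max( L(1), max_{1≤i≤n} L(xᵢ^{2d}) ). -/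
open MvPolynomial Finset

lemma mb_key {n d : ℕ} (L : MvPolynomial (Fin n) ℝ →ₗ[ℝ] ℝ)
    (hpsd : ∀ g : MvPolynomial (Fin n) ℝ, g.totalDegree ≤ d → 0 ≤ L (g ^ 2))
    (β γ : Fin n →₀ ℕ) (hβ : β.degree ≤ d) (hγ : γ.degree ≤ d) :
    2 * |L (monomial (β + γ) 1)| ≤ L (monomial (β + β) 1) + L (monomial (γ + γ) 1) := by
  have tb : (monomial β (1:ℝ)).totalDegree ≤ d := (totalDegree_monomial_le _ _).trans hβ
  have tg : (monomial γ (1:ℝ)).totalDegree ≤ d := (totalDegree_monomial_le _ _).trans hγ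
  have h1 := hpsd (monomial β 1 + monomial γ 1)
    ((totalDegree_add _ _).trans (max_le tb tg))
  have h2 := hpsd (monomial β 1 - monomial γ 1)
    ((totalDegree_sub _ _).trans (max_le tb tg))
  have e1 : (monomial β (1:ℝ) + monomial γ 1) ^ 2 =
      monomial (β + β) 1 + (2:ℝ) • monomial (β + γ) 1 + monomial (γ + γ) 1 := by
    have : (2:ℝ) • monomial (β + γ) (1:ℝ) = 2 * (monomial β 1 * monomial γ 1) := by
      rw [monomial_mul, one_mul, two_smul, two_mul]
    rw [this, ← one_mul (1:ℝ), ← monomial_mul, ← monomial_mul]; simp only [one_mul]; ring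
  have e2 : (monomial β (1:ℝ) - monomial γ 1) ^ 2 =
      monomial (β + β) 1 - (2:ℝ) • monomial (β + γ) 1 + monomial (γ + γ) 1 := by
    have : (2:ℝ) • monomial (β + γ) (1:ℝ) = 2 * (monomial β 1 * monomial γ 1) := by
      rw [monomial_mul, one_mul, two_smul, two_mul]
    rw [this, ← one_mul (1:ℝ), ← monomial_mul, ← monomial_mul]; simp only [one_mul]; ring
  rw [e1] at h1
  rw [e2] at h2
  simp only [map_add, map_sub, map_smul, smul_eq_mul] at h1 h2
  rcases abs_cases (L (monomial (β + γ) 1)) with h | h <;> linarith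

lemma mb_split {n : ℕ} (d : ℕ) : ∀ (e : ℕ) (α : Fin n →₀ ℕ), α.degree ≤ d + e →
    ∃ β γ : Fin n →₀ ℕ, α = β + γ ∧ β.degree ≤ d ∧ γ.degree ≤ e := by
  intro e
  induction e with
  | zero => intro α h; exact ⟨α, 0, by simp, by simpa using h, by simp⟩
  | succ e ih =>
    intro α h
    by_cases h0 : α = 0
    · exact ⟨0, 0, by simp [h0], by simp, by simp⟩
    obtain ⟨i, hi⟩ := Finsupp.ne_iff.mp h0
    have hs : Finsupp.single i 1 ≤ α := by
      rw [Finsupp.single_le_iff]; simp at hi; omega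
    obtain ⟨α', rfl⟩ := exists_add_of_le hs
    simp only [map_add, Finsupp.degree_single] at h
    obtain ⟨β, γ, rfl, h1, h2⟩ := ih α' (by omega)
    refine ⟨β, Finsupp.single i 1 + γ, by abel, h1, ?_⟩
    simp only [map_add, Finsupp.degree_single]; omega

lemma mb_sq {n : ℕ} (ε : Fin n →₀ ℕ) {i j : Fin n} (hij : i ≠ j) (h : ε j ≤ ε i) :
    ∑ k, (ε + Finsupp.single i 1 + Finsupp.single j 1 : Fin n →₀ ℕ) k ^ 2 <
      ∑ k, (ε + Finsupp.single i 1 + Finsupp.single i 1 : Fin n →₀ ℕ) k ^ 2 := by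
  have hj : j ∈ (Finset.univ.erase i) := by simp [hij.symm]
  simp only [← Finset.add_sum_erase _ _ (Finset.mem_univ i), ← Finset.add_sum_erase _ _ hj]
  have : ∀ k ∈ (Finset.univ.erase i).erase j,
      (ε + Finsupp.single i 1 + Finsupp.single j 1 : Fin n →₀ ℕ) k ^ 2 =
      (ε + Finsupp.single i 1 + Finsupp.single i 1 : Fin n →₀ ℕ) k ^ 2 := by
    intro k hk
    simp only [Finset.mem_erase] at hk
    simp [Finsupp.single_apply, Ne.symm hk.1, Ne.symm hk.2.1]
  rw [Finset.sum_congr rfl this]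
  simp [Finsupp.single_apply, hij, hij.symm]
  nlinarith

/-- Lemma 1 of [arch]: if `L(g²) ≥ 0` for every polynomial `g` of degree at most `d`,
then for every multi-index `α` with `|α| ≤ 2d`,
`|L(x^α)| ≤ max (L(1)) (maxᵢ L(xᵢ^{2d}))`. -/
theorem moment_bound {n d : ℕ} (hn : 0 < n) (L : MvPolynomial (Fin n) ℝ →ₗ[ℝ] ℝ)
    (hpsd : ∀ g : MvPolynomial (Fin n) ℝ, g.totalDegree ≤ d → 0 ≤ L (g ^ 2))
    (α : Fin n →₀ ℕ) (hα : α.degree ≤ 2 * d) :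
    |L (monomial α 1)| ≤
      max (L 1)
        (Finset.univ.sup' (Finset.univ_nonempty_iff.mpr ⟨⟨0, hn⟩⟩)
          fun i : Fin n => L (X i ^ (2 * d))) := by
  have key := mb_key L hpsd
  set y : (Fin n →₀ ℕ) → ℝ := fun β => L (monomial (β + β) 1) with hy
  have hfin : {β : Fin n →₀ ℕ | β.degree ≤ d}.Finite := Finsupp.finite_of_degree_le d
  obtain ⟨b0, hb0, hmax⟩ := Set.exists_max_image _ y hfin ⟨0, by simp⟩
  have hfin2 : {β : Fin n →₀ ℕ | β.degree ≤ d ∧ y β = y b0}.Finite :=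
    hfin.subset fun β h => h.1
  obtain ⟨b, ⟨hbd, hb⟩, hN⟩ := Set.exists_max_image _
    (fun β : Fin n →₀ ℕ => ∑ k, β k ^ 2) hfin2 ⟨b0, hb0, rfl⟩
  simp only [Set.mem_setOf_eq] at hmax hN hb0
  -- midpoint principle
  have mid : ∀ γ δ : Fin n →₀ ℕ, γ.degree ≤ d → δ.degree ≤ d → γ + δ = b + b →
      ∑ k, γ k ^ 2 ≤ ∑ k, b k ^ 2 := by
    intro γ δ hγ hδ h
    have h1 := key γ δ hγ hδ
    rw [h] at h1
    have h2 := le_abs_self (L (monomial (b + b) 1))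
    have h3 := hmax γ hγ
    have h4 := hmax δ hδ
    have hb' := hb
    simp only [hy] at h3 h4 hb'
    refine hN γ ⟨hγ, ?_⟩
    simp only [hy]
    linarith
  have hbM : y b ≤ max (L 1) (Finset.univ.sup' (Finset.univ_nonempty_iff.mpr ⟨⟨0, hn⟩⟩)
          fun i : Fin n => L (X i ^ (2 * d))) := by
    by_cases h0 : b = 0
    · apply le_max_of_le_left
      simp [hy, h0]
    obtain ⟨i, -, hi⟩ := Finset.exists_max_image (Finset.univ : Finset (Fin n)) b ⟨⟨0, hn⟩, by simp⟩
    simp only [Finset.mem_univ, true_implies] at hi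
    have hipos : 0 < b i := by
      obtain ⟨j, hj⟩ := Finsupp.ne_iff.mp h0
      have := hi j
      simp at hj; omega
    by_cases hj : ∃ j, j ≠ i ∧ 0 < b j
    · exfalso
      obtain ⟨j, hji, hj⟩ := hj
      have hle : Finsupp.single i 1 + Finsupp.single j 1 ≤ b := by
        intro k
        simp only [Finsupp.add_apply, Finsupp.single_apply]
        split_ifs <;> subst_vars <;> first | omega | simp_all
      obtain ⟨ε, rfl⟩ := exists_add_of_le hle
      have e : Finsupp.single i 1 + Finsupp.single j 1 + ε =
        ε + Finsupp.single i 1 + Finsupp.single j 1 := by abel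
      have hij := hi j
      simp [Finsupp.single_apply, hji, hji.symm] at hij
      have h1 := mb_sq ε hji.symm hij
      simp only [map_add, Finsupp.degree_single] at hbd
      have h2 := mid (ε + Finsupp.single i 1 + Finsupp.single i 1)
        (ε + Finsupp.single j 1 + Finsupp.single j 1)
        (by simp only [map_add, Finsupp.degree_single]; omega)
        (by simp only [map_add, Finsupp.degree_single]; omega) (by abel)
      rw [e] at h2
      omega
    · push Not at hj
      obtain ⟨m, hm⟩ : ∃ m, b i = m + 1 := ⟨b i - 1, by omega⟩
      have hbs : b = Finsupp.single i (m + 1) := by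
        ext k
        by_cases hk : k = i
        · subst hk; simp [hm]
        · have := hj k hk
          simp [Finsupp.single_apply, Ne.symm hk]; omega
      rw [hbs, Finsupp.degree_single] at hbd
      by_cases hmd : m + 1 = d
      · apply le_max_of_le_right
        refine le_trans (le_of_eq ?_) (Finset.le_sup' _ (Finset.mem_univ i))
        simp only [hy]
        rw [hbs, X_pow_eq_monomial, ← Finsupp.single_add, hmd, two_mul]
      · exfalso
        have h2 := mid (Finsupp.single i (m + 2)) (Finsupp.single i m)
          (by rw [Finsupp.degree_single]; omega) (by rw [Finsupp.degree_single]; omega)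
          (by rw [hbs, ← Finsupp.single_add, ← Finsupp.single_add]; congr 1; omega)
        rw [hbs] at h2
        have hs : ∀ c : ℕ, ∑ k, (Finsupp.single i c : Fin n →₀ ℕ) k ^ 2 = c ^ 2 := by
          intro c
          rw [Finset.sum_eq_single i]
          · simp
          · intro k _ hk
            simp [Finsupp.single_apply, Ne.symm hk]
          · simp
        rw [hs, hs] at h2
        nlinarith
  obtain ⟨β, γ, rfl, h1, h2⟩ := mb_split d d α (by omega)
  have h3 := key β γ h1 h2
  have h4 := hmax β h1
  have h5 := hmax γ h2
  refine le_trans ?_ hbM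
  rw [hb]
  simp only [hy] at h4 h5 ⊢
  linarith
end

section
/- Let f ∈ ℝ[x₁,…,xₙ] with deg f ≤ 2d. Then the two optimization problems sup{ −L(f) : L linear on polynomials of degree ≤ 2d, L(g²) ≥ 0 for all g of degree ≤ d, |L(x^α)| ≤ 1 for all |α| ≤ 2d } and sup{ −L(f) : L linear on polynomials of degree ≤ 2d, L(g²) ≥ 0 for all g of degree ≤ d, L(1) ≤ 1, L(xᵢ^{2d}) ≤ 1 for i = 1,…,n } have the same optimal value. -/
open MvPolynomial Finset

theorem aux_simplex {σ : Type} [Fintype σ] [DecidableEq σ] [Nonempty σ] (d : ℕ)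
    (φ : (σ →₀ ℕ) → ℝ)
    (h0 : ∀ a, a.degree = d → 0 ≤ φ a)
    (hmid : ∀ a b c, a.degree = d → b.degree = d → c.degree = d → b + c = a + a →
      φ a ^ 2 ≤ φ b * φ c)
    (hv : ∀ i, φ (Finsupp.single i d) ≤ 1) (a₀ : σ →₀ ℕ) (ha₀ : a₀.degree = d) : φ a₀ ≤ 1 := by
  obtain ⟨a, ha, hmax⟩ := Set.exists_max_image {f : σ →₀ ℕ | f.degree = d}
    (fun a => toLex (φ a, ∑ k, a k ^ 2)) (Finsupp.finite_of_degree_eq d) ⟨a₀, ha₀⟩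
  simp only [Set.mem_setOf_eq] at ha hmax
  have hle : ∀ b : σ →₀ ℕ, b.degree = d → φ b < φ a ∨ (φ b = φ a ∧ ∑ k, b k ^ 2 ≤ ∑ k, a k ^ 2) := by
    intro b hb
    have := hmax b hb
    rwa [Prod.Lex.toLex_le_toLex] at this
  have key : φ a ≤ 1 := by
    by_contra! h1
    by_cases hij : ∃ i j, i ≠ j ∧ a i ≠ 0 ∧ a j ≠ 0
    · obtain ⟨i, j, hne, hi, hj⟩ := hij
      obtain ⟨c, hc⟩ : ∃ c : σ →₀ ℕ, a = c + Finsupp.single i 1 + Finsupp.single j 1 := by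
        refine ⟨a - Finsupp.single i 1 - Finsupp.single j 1, ?_⟩
        ext k
        simp only [Finsupp.add_apply, Finsupp.tsub_apply, Finsupp.single_apply]
        split_ifs with h1 h2 h2
        · exact absurd (h1.trans h2.symm) hne
        · subst h1; omega
        · subst h2; omega
        · omega
      have hdeg : c.degree + 1 + 1 = d := by
        rw [← ha, hc]; simp [map_add]
      set b := c + Finsupp.single i 1 + Finsupp.single i 1 with hb
      set e := c + Finsupp.single j 1 + Finsupp.single j 1 with he
      have hbd : b.degree = d := by rw [← hdeg, hb]; simp [map_add]
      have hed : e.degree = d := by rw [← hdeg, he]; simp [map_add]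
      have hm := hmid a b e ha hbd hed (by rw [hb, he, hc]; abel)
      have hsum : ∑ k, a k ^ 2 + ∑ k, a k ^ 2 < ∑ k, b k ^ 2 + ∑ k, e k ^ 2 := by
        rw [← Finset.sum_add_distrib, ← Finset.sum_add_distrib]
        apply Finset.sum_lt_sum
        · intro k _
          rw [hb, he, hc]
          simp only [Finsupp.add_apply, Finsupp.single_apply]
          split_ifs <;> nlinarith
        · refine ⟨i, Finset.mem_univ _, ?_⟩
          rw [hb, he, hc]
          simp only [Finsupp.add_apply, Finsupp.single_apply, if_neg hne.symm]
          simp only [if_true]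
          nlinarith
      have hb0 := h0 b hbd
      have he0 := h0 e hed
      rcases hle b hbd with h | ⟨h, h'⟩
      · rcases hle e hed with g | ⟨g, g'⟩ <;> nlinarith
      · rcases hle e hed with g | ⟨g, g'⟩
        · nlinarith
        · omega
    · push Not at hij
      have : ∃ i, a = Finsupp.single i d := by
        by_cases hz : ∃ i, a i ≠ 0
        · obtain ⟨i, hi⟩ := hz
          have hs : a = Finsupp.single i (a i) := by
            ext k
            rw [Finsupp.single_apply]
            split_ifs with h
            · rw [h]
            · exact hij i k h hi
          refine ⟨i, ?_⟩
          have : a i = d := by rw [← ha, hs]; simp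
          rw [← this]; exact hs
        · push Not at hz
          have : a = 0 := by ext k; simp [hz k]
          subst this
          have : d = 0 := by rw [← ha]; simp
          subst this
          exact ⟨Classical.arbitrary σ, by simp⟩
      obtain ⟨i, hi⟩ := this
      have := hv i
      rw [← hi] at this
      linarith
  rcases hle a₀ ha₀ with h | ⟨h, _⟩ <;> linarith

theorem aux_cs {n d : ℕ} (L : MvPolynomial (Fin n) ℝ →ₗ[ℝ] ℝ)
    (hL : ∀ g : MvPolynomial (Fin n) ℝ, g.totalDegree ≤ d → 0 ≤ L (g ^ 2))
    (b c : Fin n →₀ ℕ) (hb : b.degree ≤ d) (hc : c.degree ≤ d) :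
    L (monomial (b + c) 1) ^ 2 ≤ L (monomial (b + b) 1) * L (monomial (c + c) 1) := by
  have hdeg : ∀ a : Fin n →₀ ℕ, a.degree ≤ d → ∀ t : ℝ, (monomial a t).totalDegree ≤ d :=
    fun a ha t => (totalDegree_monomial_le a t).trans ha
  have := discrim_le_zero (a := L (monomial (c + c) 1)) (b := 2 * L (monomial (b + c) 1))
    (c := L (monomial (b + b) 1)) (by
      intro x
      have h := hL (monomial b 1 + monomial c x)
        ((totalDegree_add _ _).trans (max_le (hdeg b hb 1) (hdeg c hc x)))
      have e : (monomial b (1 : ℝ) + monomial c x) ^ 2 =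
          (x * x) • monomial (c + c) (1 : ℝ) + (2 * x) • monomial (b + c) (1 : ℝ)
            + monomial (b + b) (1 : ℝ) := by
        have e1 : (monomial b (1 : ℝ) + monomial c x) ^ 2 =
          monomial c x * monomial c x + (monomial b 1 * monomial c x + monomial b 1 * monomial c x)
            + monomial b 1 * monomial b 1 := by ring
        rw [e1]
        simp only [monomial_mul, smul_monomial, ← map_add (monomial (b + c))]
        congr 3 <;> simp <;> ring
      rw [e] at h
      simp only [map_add, map_smul, smul_eq_mul] at h
      linarith)
  rw [discrim] at this
  nlinarith

theorem aux_even {n d : ℕ} (L : MvPolynomial (Fin n) ℝ →ₗ[ℝ] ℝ)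
    (hL : ∀ g : MvPolynomial (Fin n) ℝ, g.totalDegree ≤ d → 0 ≤ L (g ^ 2))
    (h1 : L 1 ≤ 1) (hX : ∀ i : Fin n, L (X i ^ (2 * d)) ≤ 1)
    (a : Fin n →₀ ℕ) (ha : a.degree ≤ d) :
    0 ≤ L (monomial (a + a) 1) ∧ L (monomial (a + a) 1) ≤ 1 := by
  have hn : ∀ a : Fin n →₀ ℕ, a.degree ≤ d → 0 ≤ L (monomial (a + a) 1) := by
    intro a ha
    have := hL (monomial a 1) ((totalDegree_monomial_le a 1).trans ha)
    rwa [sq, monomial_mul, one_mul] at this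
  refine ⟨hn a ha, ?_⟩
  have hs : ∀ b : Option (Fin n) →₀ ℕ, b.degree = b none + b.some.degree := by
    intro b
    rw [Finsupp.degree_eq_sum, Finsupp.degree_eq_sum, Fintype.sum_option]
    simp
  have := aux_simplex (σ := Option (Fin n)) d (fun b => L (monomial (b.some + b.some) 1))
    (fun b hb => hn _ (by have := hs b; omega))
    (by
      intro a b c ha hb hc h
      have h' : a.some + a.some = b.some + c.some := by
        rw [← Finsupp.some_add, ← Finsupp.some_add, h]
      simp only [h']
      exact aux_cs L hL _ _ (by have := hs b; omega) (by have := hs c; omega))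
    (by
      intro i
      cases i with
      | none => simpa using h1
      | some i =>
        have := hX i
        rw [X_pow_eq_monomial, two_mul, Finsupp.single_add] at this
        simpa using this)
    (a.optionElim (d - a.degree)) (by rw [hs]; simp; omega)
  simpa using this

/-- The dual semidefinite program with the bounds `|L(x^α)| ≤ 1` for all `|α| ≤ 2d`
and its reduced form with only the bounds `L(1) ≤ 1`, `L(xᵢ^{2d}) ≤ 1`, `i = 1,…,n`,
have the same optimal value. -/
theorem dual_reduced_same_value {n d : ℕ} (f : MvPolynomial (Fin n) ℝ)
    (hf : f.totalDegree ≤ 2 * d) :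
    sSup {r : ℝ | ∃ L : MvPolynomial (Fin n) ℝ →ₗ[ℝ] ℝ,
        (∀ g : MvPolynomial (Fin n) ℝ, g.totalDegree ≤ d → 0 ≤ L (g ^ 2)) ∧
        (∀ α : Fin n →₀ ℕ, α.degree ≤ 2 * d → |L (monomial α 1)| ≤ 1) ∧
        r = -L f} =
    sSup {r : ℝ | ∃ L : MvPolynomial (Fin n) ℝ →ₗ[ℝ] ℝ,
        (∀ g : MvPolynomial (Fin n) ℝ, g.totalDegree ≤ d → 0 ≤ L (g ^ 2)) ∧
        L 1 ≤ 1 ∧ (∀ i : Fin n, L (X i ^ (2 * d)) ≤ 1) ∧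
        r = -L f} := by
  congr 1
  ext r
  constructor
  · rintro ⟨L, hL, hb, hr⟩
    refine ⟨L, hL, ?_, ?_, hr⟩
    · exact (le_abs_self _).trans (hb 0 (by simp))
    · intro i
      rw [X_pow_eq_monomial]
      exact (le_abs_self _).trans (hb _ (Finsupp.degree_single _ _).le)
  · rintro ⟨L, hL, h1, hX, hr⟩
    refine ⟨L, hL, ?_, hr⟩
    intro α hα
    obtain ⟨b, c, hbc, hb, hc⟩ : ∃ b c : Fin n →₀ ℕ, α = b + c ∧ b.degree ≤ d ∧ c.degree ≤ d := by
      obtain ⟨b, hle, hb⟩ := Finsupp.exists_le_degree_eq α (min d α.degree) (min_le_right _ _)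
      obtain ⟨c, rfl⟩ := exists_add_of_le hle
      rw [map_add] at hα hb
      exact ⟨b, c, rfl, by omega, by omega⟩
    have hcs := aux_cs L hL b c hb hc
    obtain ⟨b0, b1⟩ := aux_even L hL h1 hX b hb
    obtain ⟨c0, c1⟩ := aux_even L hL h1 hX c hc
    rw [hbc, ← sq_le_one_iff_abs_le_one]
    exact hcs.trans (mul_le_one₀ b1 c0 c1)
end

section
/- The polynomial f(x₁, x₂) = x₁²x₂²(x₁² + x₂² − 1) + 1/27 is nonnegative on ℝ²: f(x₁, x₂) ≥ 0 for all (x₁, x₂) ∈ ℝ². -/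
/-- The Motzkin-like polynomial `f(x₁,x₂) = x₁²x₂²(x₁² + x₂² - 1) + 1/27` is
nonnegative on `ℝ²`. -/
theorem motzkin_like_nonneg (x₁ x₂ : ℝ) :
    0 ≤ x₁ ^ 2 * x₂ ^ 2 * (x₁ ^ 2 + x₂ ^ 2 - 1) + 1 / 27 := by
  have ha : 0 ≤ x₁ ^ 2 := sq_nonneg _
  have hb : 0 ≤ x₂ ^ 2 := sq_nonneg _
  generalize x₁ ^ 2 = a at *
  generalize x₂ ^ 2 = b at *
  rcases le_total 1 (a + b) with h | h
  · have : 0 ≤ a * b * (a + b - 1) := mul_nonneg (mul_nonneg ha hb) (by linarith)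
    linarith
  · have h1 : 0 ≤ (a - b) ^ 2 * (1 - (a + b)) := mul_nonneg (sq_nonneg _) (by linarith)
    have h2 : 0 ≤ (a + b - 2 / 3) ^ 2 * (a + b + 1 / 3) :=
      mul_nonneg (sq_nonneg _) (by linarith)
    linarith
end

section
/- The polynomial f(x₁, x₂) = x₁²x₂²(x₁² + x₂² − 1) + 1/27 is not a sum of squares of polynomials: there exist no polynomials h₁, …, h_k ∈ ℝ[x₁, x₂] with f = h₁² + ⋯ + h_k². -/
open MvPolynomial

lemma sos_deg {k : ℕ} (q : Fin k → Polynomial ℝ) (d : ℕ)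
    (h : (∑ i, (q i) ^ 2).natDegree ≤ 2 * d) : ∀ i, (q i).natDegree ≤ d := by
  have key : ∀ m : ℕ, (∀ i, (q i).natDegree ≤ d + m) → ∀ i, (q i).natDegree ≤ d := by
    intro m
    induction m with
    | zero => intro H; simpa using H
    | succ m ih =>
      intro H
      apply ih
      have h0 : (∑ i, (q i) ^ 2).coeff (2 * (d + (m + 1))) = 0 :=
        Polynomial.coeff_eq_zero_of_natDegree_lt (by omega)
      rw [Polynomial.finsetSum_coeff] at h0
      have h1 : ∀ i, ((q i) ^ 2).coeff (2 * (d + (m + 1))) = (q i).coeff (d + (m + 1)) ^ 2 :=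
        fun i => Polynomial.coeff_pow_of_natDegree_le (H i)
      simp only [h1] at h0
      rw [Finset.sum_eq_zero_iff_of_nonneg (fun i _ => sq_nonneg _)] at h0
      intro i
      have h2 : (q i).coeff (d + (m + 1)) = 0 := by
        have := h0 i (Finset.mem_univ i)
        exact pow_eq_zero_iff (two_ne_zero) |>.1 this
      rw [Polynomial.natDegree_le_iff_coeff_eq_zero]
      intro N hN
      rcases Nat.lt_or_ge (d + (m + 1)) N with h3 | h3
      · exact Polynomial.coeff_eq_zero_of_natDegree_lt (lt_of_le_of_lt (H i) h3)
      · have : N = d + (m + 1) := by omega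
        rw [this]; exact h2
  apply key (∑ i, (q i).natDegree)
  intro i
  have := Finset.single_le_sum (f := fun i => (q i).natDegree) (fun _ _ => Nat.zero_le _)
    (Finset.mem_univ i)
  omega

/-- Restriction to the line spanned by `(a, b)`. -/
noncomputable def lineMap (a b : ℝ) : MvPolynomial (Fin 2) ℝ →ₐ[ℝ] Polynomial ℝ :=
  aeval ![Polynomial.C a * Polynomial.X, Polynomial.C b * Polynomial.X]

lemma lineMap_coeff (p : MvPolynomial (Fin 2) ℝ) :
    ∃ w u v : ℝ, ∀ a b, (lineMap a b p).coeff 0 = w ∧ (lineMap a b p).coeff 1 = a * u + b * v := by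
  induction p using MvPolynomial.induction_on with
  | C r =>
    refine ⟨r, 0, 0, fun a b => ?_⟩
    simp [lineMap, Polynomial.algebraMap_eq, Polynomial.coeff_C]
  | add p q hp hq =>
    obtain ⟨w, u, v, h⟩ := hp
    obtain ⟨w', u', v', h'⟩ := hq
    refine ⟨w + w', u + u', v + v', fun a b => ?_⟩
    rw [map_add, Polynomial.coeff_add, Polynomial.coeff_add, (h a b).1, (h a b).2, (h' a b).1,
      (h' a b).2]
    exact ⟨rfl, by ring⟩
  | mul_X p i hp =>
    obtain ⟨w, u, v, h⟩ := hp
    have e : ∀ a b, ∀ c : ℝ, (lineMap a b p * (Polynomial.C c * Polynomial.X)).coeff 0 = 0 ∧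
        (lineMap a b p * (Polynomial.C c * Polynomial.X)).coeff 1 = c * w := by
      intro a b c
      rw [← mul_assoc, Polynomial.coeff_mul_X_zero, Polynomial.coeff_mul_X,
        Polynomial.coeff_mul_C, (h a b).1]
      exact ⟨rfl, by ring⟩
    fin_cases i
    · refine ⟨0, w, 0, fun a b => ?_⟩
      have := e a b a
      simpa [lineMap] using this
    · refine ⟨0, 0, w, fun a b => ?_⟩
      have := e a b b
      simpa [lineMap] using this

/-- The Motzkin-like polynomial `f(x₁,x₂) = x₁²x₂²(x₁² + x₂² - 1) + 1/27` is not a sum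
of squares of polynomials. -/
theorem motzkin_like_not_sos :
    ¬ ∃ (k : ℕ) (h : Fin k → MvPolynomial (Fin 2) ℝ),
      (X 0) ^ 2 * (X 1) ^ 2 * ((X 0) ^ 2 + (X 1) ^ 2 - 1) + C (1 / 27) =
        ∑ i, (h i) ^ 2 := by
  rintro ⟨k, h, H⟩
  have L : ∀ a b : ℝ, ∑ i, (lineMap a b (h i)) ^ 2 =
      Polynomial.C (a ^ 2 * b ^ 2 * (a ^ 2 + b ^ 2)) * Polynomial.X ^ 6
      + Polynomial.C (- (a ^ 2 * b ^ 2)) * Polynomial.X ^ 4 + Polynomial.C (1 / 27) := by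
    intro a b
    have := congrArg (lineMap a b) H
    rw [map_sum] at this
    simp only [map_pow] at this
    rw [← this]
    simp only [lineMap, map_add, map_sub, map_mul, map_pow, aeval_X, map_one, aeval_C,
      Polynomial.algebraMap_eq, map_neg, Matrix.cons_val_zero, Matrix.cons_val_one]
    ring
  have hx := sos_deg (fun i => lineMap 1 0 (h i)) 0 (by rw [L]; simp)
  have hy := sos_deg (fun i => lineMap 0 1 (h i)) 0 (by rw [L]; simp)
  have hd := sos_deg (fun i => lineMap 1 1 (h i)) 3 (by rw [L]; compute_degree)
  have c1 : ∀ i, (lineMap 1 1 (h i)).coeff 1 = 0 := by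
    intro i
    obtain ⟨w, u, v, e⟩ := lineMap_coeff (h i)
    have e1 := (e 1 0).2
    have e2 := (e 0 1).2
    rw [Polynomial.coeff_eq_zero_of_natDegree_lt (lt_of_le_of_lt (hx i) one_pos)] at e1
    rw [Polynomial.coeff_eq_zero_of_natDegree_lt (lt_of_le_of_lt (hy i) one_pos)] at e2
    rw [(e 1 1).2]
    linarith
  have c4 : ∀ i, ((lineMap 1 1 (h i)) ^ 2).coeff 4 = (lineMap 1 1 (h i)).coeff 2 ^ 2 := by
    intro i
    have z : (lineMap 1 1 (h i)).coeff 4 = 0 :=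
      Polynomial.coeff_eq_zero_of_natDegree_lt (lt_of_le_of_lt (hd i) (by norm_num))
    rw [pow_two, Polynomial.coeff_mul, Finset.Nat.sum_antidiagonal_eq_sum_range_succ_mk]
    simp [Finset.sum_range_succ, z, c1 i, pow_two]
  have F := congrArg (fun p => Polynomial.coeff p 4) (L 1 1)
  simp only [Polynomial.finsetSum_coeff, c4] at F
  have nn : 0 ≤ ∑ i, (lineMap 1 1 (h i)).coeff 2 ^ 2 := Finset.sum_nonneg fun i _ => sq_nonneg _
  rw [F] at nn
  simp only [Polynomial.coeff_add, Polynomial.coeff_C_mul, Polynomial.coeff_X_pow,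
    Polynomial.coeff_C] at nn
  norm_num at nn
end

section
/- The polynomial f(x₁, x₂) = x₁²x₂²(x₁² + x₂² − 1) + 1/27 has global minimum value 0 over ℝ², attained exactly at the four points (x₁, x₂) = (±(1/3)^{1/2}, ±(1/3)^{1/2}); that is, f ≥ 0 on ℝ² and f(x₁, x₂) = 0 if and only if x₁² = 1/3 and x₂² = 1/3. -/
/-- The Motzkin-like polynomial `f(x₁,x₂) = x₁²x₂²(x₁² + x₂² - 1) + 1/27` has global
minimum `0` on `ℝ²`, attained exactly at the four points `(±(1/3)^{1/2}, ±(1/3)^{1/2})` :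
`f ≥ 0` and `f(x₁,x₂) = 0 ↔ x₁² = 1/3 ∧ x₂² = 1/3`. -/
theorem motzkin_like_min (x₁ x₂ : ℝ) :
    0 ≤ x₁ ^ 2 * x₂ ^ 2 * (x₁ ^ 2 + x₂ ^ 2 - 1) + 1 / 27 ∧
    (x₁ ^ 2 * x₂ ^ 2 * (x₁ ^ 2 + x₂ ^ 2 - 1) + 1 / 27 = 0 ↔
      x₁ ^ 2 = 1 / 3 ∧ x₂ ^ 2 = 1 / 3) := by
  have ha := sq_nonneg x₁
  have hb := sq_nonneg x₂
  generalize x₁ ^ 2 = a at *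
  generalize x₂ ^ 2 = b at *
  have key : a * b * (a + b - 1) + 1 / 27
      = (1 - (a + b)) * (a - b) ^ 2 / 4 + (a + b - 2 / 3) ^ 2 * (a + b + 1 / 3) / 4 := by ring
  have hab : 0 ≤ a * b := mul_nonneg ha hb
  rcases le_or_gt 1 (a + b) with h | h
  · have h1 : 0 ≤ a * b * (a + b - 1) := mul_nonneg hab (by linarith)
    refine ⟨by linarith, fun h0 => by linarith, ?_⟩
    rintro ⟨rfl, rfl⟩
    norm_num
  · have h1 : 0 ≤ (1 - (a + b)) * (a - b) ^ 2 := mul_nonneg (by linarith) (sq_nonneg _)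
    have h2 : 0 ≤ (a + b - 2 / 3) ^ 2 * (a + b + 1 / 3) :=
      mul_nonneg (sq_nonneg _) (by linarith)
    refine ⟨by linarith, fun h0 => ?_, ?_⟩
    · have e1 : (1 - (a + b)) * (a - b) ^ 2 = 0 := by linarith
      have e2 : (a + b - 2 / 3) ^ 2 * (a + b + 1 / 3) = 0 := by linarith
      have e3 : (a - b) ^ 2 = 0 := (mul_eq_zero.mp e1).resolve_left (by linarith)
      have e4 : (a + b - 2 / 3) ^ 2 = 0 := (mul_eq_zero.mp e2).resolve_right (by linarith)
      have e5 := pow_eq_zero_iff (two_ne_zero) |>.mp e3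
      have e6 := pow_eq_zero_iff (two_ne_zero) |>.mp e4
      constructor <;> linarith
    · rintro ⟨rfl, rfl⟩
      norm_num
end
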